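/- Let G be a group and let a, b ∈ G satisfy a·b·a = b·a·b and a·b⁻¹·a = b·a⁻¹·b. Then (a·b⁻¹)³ = 1, (a⁻¹·b)³ = 1, and (a·b⁻¹·a⁻¹·b)³ = 1. (Applied with a = σᵢ, b = σᵢ₊₁ in the pseudosymmetric group PSₙ, this shows that the elements pᵢ = σᵢσᵢ₊₁⁻¹, qᵢ = σᵢ⁻¹σᵢ₊₁ satisfy pᵢ³ = qᵢ³ = (pᵢqᵢ)³ = 1.) -/

import Mathlib

/-- In any group, if `a` and `b` satisfy the braid relation `a·b·a = b·a·b` and the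
pseudosymmetry relation `a·b⁻¹·a = b·a⁻¹·b`, then `(a·b⁻¹)³ = (a⁻¹·b)³ = (a·b⁻¹·a⁻¹·b)³ = 1`. -/
theorem pq_cubes_eq_one {G : Type*} [Group G] (a b : G)
    (hbraid : a * b * a = b * a * b) (hps : a * b⁻¹ * a = b * a⁻¹ * b) :
    (a * b⁻¹) ^ 3 = 1 ∧ (a⁻¹ * b) ^ 3 = 1 ∧ (a * b⁻¹ * a⁻¹ * b) ^ 3 = 1 := by
  have h1 : (a * b⁻¹) ^ 3 = 1 := by
    calc (a * b⁻¹) ^ 3 = (a * b⁻¹ * a) * (b⁻¹ * a * b⁻¹) := by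
          simp only [pow_succ, pow_zero, one_mul, mul_assoc]
      _ = 1 := by rw [hps]; group
  have h2 : (a⁻¹ * b) ^ 3 = 1 := by
    calc (a⁻¹ * b) ^ 3 = a⁻¹ * (b * a⁻¹ * b) * (a⁻¹ * b) := by
          simp only [pow_succ, pow_zero, one_mul, mul_assoc]
      _ = 1 := by rw [← hps]; group
  refine ⟨h1, h2, ?_⟩
  have h3 : b⁻¹ * a⁻¹ * b = a * b⁻¹ * a⁻¹ := by
    have e : b * (b * a * b) = (b * a * b) * a := by
      rw [← hbraid]
      calc b * (a * b * a) = (b * a * b) * a := by group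
        _ = a * b * a * a := by rw [hbraid]
    calc b⁻¹ * a⁻¹ * b = b⁻¹ * a⁻¹ * b⁻¹ * (b * (b * a * b)) * (b⁻¹ * a⁻¹) := by group
      _ = a * b⁻¹ * a⁻¹ := by rw [e]; group
  have h4 : a * b⁻¹ * a⁻¹ * b = a * (a * b⁻¹) * a⁻¹ := by
    calc a * b⁻¹ * a⁻¹ * b = a * (b⁻¹ * a⁻¹ * b) := by group
      _ = a * (a * b⁻¹) * a⁻¹ := by rw [h3]; group
  rw [h4, conj_pow, h1]
  group
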